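/- Suppose dim W = 7 and that dim(W ∩ (v∧V₅)) ≤ 2 for every nonzero v ∈ V₅. Then the assignment ℂv ↦ W ∩ (v∧V₅) defines a bijection from the set of one-dimensional subspaces ℂv of V₅ such that dim(A(W,q) ∩ F_v) ≥ 3 onto the set of two-dimensional subspaces L of W such that L ⊆ v′∧V₅ for some nonzero v′ ∈ V₅ and q vanishes identically on L × L. -/

import Mathlib

open ExteriorAlgebra Module

noncomputable section

namespace EPW

variable (V : Type) [AddCommGroup V] [Module ℂ V]

/-- A volume form `vol : ⋀ᵏV → ℂ` extended to the whole exterior algebra by composing with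
the projection onto the degree-`k` graded component; on `⋀ᵏV` it agrees with `vol`. -/
def volC (k : ℕ) (vol : ⋀[ℂ]^k V →ₗ[ℂ] ℂ) : ExteriorAlgebra ℂ V →ₗ[ℂ] ℂ :=
  vol ∘ₗ (DirectSum.component ℂ ℕ (fun i => ↥(⋀[ℂ]^i V)) k) ∘ₗ
    (DirectSum.decomposeLinearEquiv (fun i : ℕ => ⋀[ℂ]^i V)).toLinearMap

/-- `F_v = v ∧ ⋀²V₆ = {v ∧ η : η ∈ ⋀²V₆}`. -/
def Fv (v : V) : Submodule ℂ (ExteriorAlgebra ℂ V) :=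
  Submodule.map (LinearMap.mulLeft ℂ (ExteriorAlgebra.ι ℂ v)) (⋀[ℂ]^2 V)

/-- The image of `⋀ᵏW` inside the exterior algebra of `V`, for a subspace `W ⊆ V`. -/
def extPow (W : Submodule ℂ V) (k : ℕ) : Submodule ℂ (ExteriorAlgebra ℂ V) :=
  (Submodule.map (ExteriorAlgebra.ι ℂ) W) ^ k

/-- `v ∧ W = {v ∧ u : u ∈ W}` for a subspace `W ⊆ V`. -/
def vWedge (v : V) (W : Submodule ℂ V) : Submodule ℂ (ExteriorAlgebra ℂ V) :=
  Submodule.map (LinearMap.mulLeft ℂ (ExteriorAlgebra.ι ℂ v))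
    (Submodule.map (ExteriorAlgebra.ι ℂ) W)

/-- The Lagrangian subspace `A(W,q)` associated to a subspace `W ⊆ ⋀²V₅` and a bilinear
form `q` on `W`:  `A(W,q) = {η + x∧w : w ∈ W, η ∈ ⋀³V₅, vol(x∧η∧w') = -q(w,w') ∀ w' ∈ W}`. -/
def AWq (vol : ⋀[ℂ]^6 V →ₗ[ℂ] ℂ) (x : V) (V₅ : Submodule ℂ V)
    (W : Submodule ℂ (ExteriorAlgebra ℂ V)) (q : W →ₗ[ℂ] W →ₗ[ℂ] ℂ) :
    Submodule ℂ (ExteriorAlgebra ℂ V) where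
  carrier := {z | ∃ w : W, ∃ η ∈ extPow V V₅ 3,
    z = η + ExteriorAlgebra.ι ℂ x * (w : ExteriorAlgebra ℂ V) ∧
    ∀ w' : W, volC V 6 vol (ExteriorAlgebra.ι ℂ x * η * (w' : ExteriorAlgebra ℂ V)) = - q w w'}
  add_mem' := by
    rintro a b ⟨w, η, hη, rfl, hc⟩ ⟨w', η', hη', rfl, hc'⟩
    refine ⟨w + w', η + η', add_mem hη hη', ?_, ?_⟩
    · rw [Submodule.coe_add, mul_add]
      abel
    · intro w₀
      have h1 : ExteriorAlgebra.ι ℂ x * (η + η') * (w₀ : ExteriorAlgebra ℂ V)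
          = ExteriorAlgebra.ι ℂ x * η * (w₀ : ExteriorAlgebra ℂ V)
            + ExteriorAlgebra.ι ℂ x * η' * (w₀ : ExteriorAlgebra ℂ V) := by
        rw [mul_add, add_mul]
      rw [h1, map_add, hc w₀, hc' w₀, map_add, LinearMap.add_apply]
      ring
  zero_mem' := by
    refine ⟨0, 0, zero_mem _, by simp, ?_⟩
    intro w'
    simp
  smul_mem' := by
    rintro c a ⟨w, η, hη, rfl, hc⟩
    refine ⟨c • w, c • η, Submodule.smul_mem _ c hη, ?_, ?_⟩
    · rw [Submodule.coe_smul, smul_add, mul_smul_comm]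
    · intro w₀
      have h1 : ExteriorAlgebra.ι ℂ x * (c • η) * (w₀ : ExteriorAlgebra ℂ V)
          = c • (ExteriorAlgebra.ι ℂ x * η * (w₀ : ExteriorAlgebra ℂ V)) := by
        rw [mul_smul_comm, smul_mul_assoc]
      rw [h1, map_smul, hc w₀, map_smul, LinearMap.smul_apply, smul_eq_mul, smul_eq_mul]
      ring

end EPW

/-!
For nonzero `v ∈ V₅`, an element `η + x ∧ w` of `A(W,q)` lies in `F_v` exactly when
`w ∈ S := W ∩ (v ∧ V₅)` and `η ∈ v ∧ ⋀²V₅`, a space of dimension 6. So `A(W,q) ∩ F_v` is the kernel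
of `(w, η) ↦ q(w, ·) + vol(x ∧ η ∧ ·)` on `S × (v ∧ ⋀²V₅)`. As the wedge pairing is nondegenerate,
the functionals `vol(x ∧ η ∧ ·)` on `W` are exactly those vanishing on `S`, whence
`dim (A(W,q) ∩ F_v) + dim W = 6 + dim S + dim ker (q|S)`.
With `dim W = 7` and `dim S ≤ 2`, the intersection has dimension at least 3 exactly when `dim S = 2`
and `q` vanishes on `S`. Finally `v ∧ V₅` and `v' ∧ V₅` meet in at most the line `ℂ (v ∧ v')` when
`v, v'` are independent, so a plane contained in `v ∧ V₅` determines `ℂ v`.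
-/

namespace EPW

section LinearAlgebra

variable {K M N W P : Type*} [Field K] [AddCommGroup M] [Module K M] [AddCommGroup N] [Module K N]
  [AddCommGroup W] [Module K W] [AddCommGroup P] [Module K P]

theorem exists_dual_eq_zero_eq_one {U : Submodule K M} {x : M} (hx : x ∉ U) :
    ∃ d : Dual K M, (∀ u ∈ U, d u = 0) ∧ d x = 1 := by
  obtain ⟨f, hfx, hfU⟩ := Submodule.exists_le_ker_of_notMem hx
  refine ⟨(f x)⁻¹ • f, fun u hu => ?_, inv_mul_cancel₀ hfx⟩
  rw [LinearMap.smul_apply, LinearMap.mem_ker.1 (hfU hu), smul_zero]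

theorem finrank_map_add_finrank_inf_ker (f : M →ₗ[K] N) (p : Submodule K M)
    [FiniteDimensional K p] :
    finrank K (p.map f) + finrank K (p ⊓ LinearMap.ker f : Submodule K M) = finrank K p := by
  rw [← LinearMap.finrank_range_add_finrank_ker (f.domRestrict p), LinearMap.range_domRestrict,
    LinearMap.ker_domRestrict, ← Submodule.finrank_map_subtype_eq p, Submodule.map_comap_subtype]

theorem finrank_ker_domRestrict₁₂_eq_iff [FiniteDimensional K W] (q : W →ₗ[K] W →ₗ[K] K)
    (S : Submodule K W) :
    finrank K (LinearMap.ker (q.domRestrict₁₂ S S)) = finrank K S ↔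
      ∀ a ∈ S, ∀ b ∈ S, q a b = 0 := by
  constructor
  · intro h a ha b hb
    have restrict_eq_zero := LinearMap.ker_eq_top.1 (Submodule.eq_top_of_finrank_eq h)
    exact LinearMap.congr_fun₂ restrict_eq_zero ⟨a, ha⟩ ⟨b, hb⟩
  · intro h
    have restrict_eq_zero : q.domRestrict₁₂ S S = 0 := by
      ext a b
      exact h a a.2 b b.2
    rw [restrict_eq_zero, LinearMap.ker_zero, finrank_top]

/-- Since `S = ker ψᵀ`, the kernel on the left is that of the saddle-point operator
`(w, p) ↦ (q w + ψ p, ψᵀ w)`. -/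
theorem finrank_ker_coprod_add_finrank [FiniteDimensional K W] [FiniteDimensional K P]
    (q : W →ₗ[K] W →ₗ[K] K) (ψ : P →ₗ[K] W →ₗ[K] K) {S : Submodule K W}
    (hS : LinearMap.ker ψ.flip = S) :
    finrank K (LinearMap.ker ((q.domRestrict S).coprod ψ)) + finrank K W =
      finrank K P + finrank K S + finrank K (LinearMap.ker (q.domRestrict₁₂ S S)) := by
  have range_ψ : LinearMap.range ψ = S.dualAnnihilator := by
    rw [← hS, ← LinearMap.dualCoannihilator_range_eq_ker_flip,
      Subspace.dualCoannihilator_dualAnnihilator_eq]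
  let c : S × P →ₗ[K] Dual K W := (q.domRestrict S).coprod ψ
  let qS : S →ₗ[K] Dual K S := q.domRestrict₁₂ S S
  have range_restrict : (LinearMap.range c).map S.dualRestrict = LinearMap.range qS := by
    have ψ_restrict : (LinearMap.range ψ).map S.dualRestrict = ⊥ := by
      rw [range_ψ, ← Submodule.dualRestrict_ker_eq_dualAnnihilator]
      exact LinearMap.le_ker_iff_map.1 le_rfl
    rw [LinearMap.range_coprod, Submodule.map_sup, ψ_restrict, sup_bot_eq, ← LinearMap.range_comp]
    rfl
  have range_inf : LinearMap.range c ⊓ LinearMap.ker S.dualRestrict = S.dualAnnihilator := by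
    rw [Submodule.dualRestrict_ker_eq_dualAnnihilator, inf_eq_right, ← range_ψ,
      LinearMap.range_coprod]
    exact le_sup_right
  have restrict := finrank_map_add_finrank_inf_ker S.dualRestrict (LinearMap.range c)
  rw [range_restrict, range_inf] at restrict
  have rank_c := c.finrank_range_add_finrank_ker
  have rank_qS := qS.finrank_range_add_finrank_ker
  have dim_S := Subspace.finrank_add_finrank_dualAnnihilator_eq S
  rw [finrank_prod] at rank_c
  change finrank K (LinearMap.ker c) + _ = _ + finrank K (LinearMap.ker qS)
  omega

end LinearAlgebra

section CommRing

variable {R M : Type*} [CommRing R] [AddCommGroup M] [Module R M] {U : Submodule R M}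
  {θ : ExteriorAlgebra R M} {k : ℕ}

/-- The interior product on the exterior algebra by a linear form, as the Clifford contraction
for the zero quadratic form. -/
abbrev interiorProduct (d : Dual R M) : ExteriorAlgebra R M →ₗ[R] ExteriorAlgebra R M :=
  CliffordAlgebra.contractLeft (Q := (0 : QuadraticForm R M)) d

theorem interiorProduct_ι_mul (d : Dual R M) (a : M) (b : ExteriorAlgebra R M) :
    interiorProduct d (ι R a * b) = d a • b - ι R a * interiorProduct d b :=
  CliffordAlgebra.contractLeft_ι_mul d a b

theorem interiorProduct_ι (d : Dual R M) (a : M) :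
    interiorProduct d (ι R a) = algebraMap R (ExteriorAlgebra R M) (d a) :=
  CliffordAlgebra.contractLeft_ι _ d a

theorem ι_mul_interiorProduct_of_ι_mul_eq_zero {d : Dual R M} {v : M} (hd : d v = 1)
    (h : ι R v * θ = 0) : ι R v * interiorProduct d θ = θ := by
  have := interiorProduct_ι_mul d v θ
  rw [h, map_zero, hd, one_smul] at this
  exact (sub_eq_zero.1 this.symm).symm

theorem ι_mul_mem_pow_succ {u : M} (hu : u ∈ U) (hθ : θ ∈ U.map (ι R) ^ k) :
    ι R u * θ ∈ U.map (ι R) ^ (k + 1) := by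
  rw [pow_succ']
  exact Submodule.mul_mem_mul (Submodule.mem_map_of_mem hu) hθ

theorem map_ι_pow_le_exteriorPower : U.map (ι R) ^ k ≤ ⋀[R]^k M :=
  pow_le_pow_left' LinearMap.map_le_range k

theorem map_ι_top_pow (k : ℕ) : (⊤ : Submodule R M).map (ι R) ^ k = ⋀[R]^k M := by
  rw [Submodule.map_top]

theorem ι_mul_mem_exteriorPower_succ (u : M) (hθ : θ ∈ ⋀[R]^k M) :
    ι R u * θ ∈ ⋀[R]^(k + 1) M := by
  rw [← map_ι_top_pow] at hθ ⊢
  exact ι_mul_mem_pow_succ Submodule.mem_top hθ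

theorem interiorProduct_eq_zero_of_mem_pow {d : Dual R M} (hd : ∀ u ∈ U, d u = 0)
    (hθ : θ ∈ U.map (ι R) ^ k) : interiorProduct d θ = 0 := by
  induction hθ using Submodule.pow_induction_on_left' with
  | algebraMap r => exact CliffordAlgebra.contractLeft_algebraMap _ d r
  | add a b _ _ _ ha hb => rw [map_add, ha, hb, add_zero]
  | mem_mul m hm _ b _ hb =>
    obtain ⟨u, hu, rfl⟩ := hm
    rw [interiorProduct_ι_mul, hd u hu, hb, zero_smul, mul_zero, sub_zero]

theorem interiorProduct_mem_pow (d : Dual R M) (hθ : θ ∈ U.map (ι R) ^ (k + 1)) :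
    interiorProduct d θ ∈ U.map (ι R) ^ k := by
  induction k generalizing θ with
  | zero =>
    rw [zero_add, pow_one] at hθ
    obtain ⟨u, -, rfl⟩ := hθ
    rw [interiorProduct_ι, pow_zero]
    exact Submodule.algebraMap_mem _
  | succ k ih =>
    rw [pow_succ'] at hθ
    induction hθ using Submodule.mul_induction_on' with
    | mem_mul_mem m hm b hb =>
      obtain ⟨u, hu, rfl⟩ := hm
      rw [interiorProduct_ι_mul]
      exact sub_mem (Submodule.smul_mem _ _ hb) (ι_mul_mem_pow_succ hu (ih hb))
    | add a _ b _ ha hb =>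
      rw [map_add]
      exact add_mem ha hb

theorem ι_mul_ι_eq_neg (u v : M) : ι R u * ι R v = -(ι R v * ι R u) :=
  eq_neg_of_add_eq_zero_left (ι_add_mul_swap u v)

theorem ι_mul_ι_mul_self (v : M) (θ : ExteriorAlgebra R M) : ι R v * (ι R v * θ) = 0 := by
  rw [← mul_assoc, ι_sq_zero, zero_mul]

theorem ι_mul_ι_mul_eq_neg (u v : M) (θ : ExteriorAlgebra R M) :
    ι R u * (ι R v * θ) = -(ι R v * (ι R u * θ)) := by
  rw [← mul_assoc, ι_mul_ι_eq_neg, neg_mul, mul_assoc]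

theorem mul_ι_of_mem_pow (u : M) (hθ : θ ∈ U.map (ι R) ^ k) :
    θ * ι R u = (-1 : R) ^ k • (ι R u * θ) := by
  induction hθ using Submodule.pow_induction_on_left' with
  | algebraMap r => rw [pow_zero, one_smul, Algebra.commutes]
  | add a b _ _ _ ha hb => rw [add_mul, ha, hb, mul_add, smul_add]
  | mem_mul m hm _ b _ hb =>
    obtain ⟨v, -, rfl⟩ := hm
    rw [mul_assoc, hb, mul_smul_comm, ι_mul_ι_mul_eq_neg, smul_neg, pow_succ, mul_neg_one,
      neg_smul]

/-- The subspace `v ∧ ⋀ᵏU`, which specialises to `vWedge` for `k = 1` and to `Fv` for `k = 2`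
and `U = ⊤`. -/
def wedgePow (v : M) (U : Submodule R M) (k : ℕ) : Submodule R (ExteriorAlgebra R M) :=
  (U.map (ι R) ^ k).map (LinearMap.mulLeft R (ι R v))

end CommRing

section Field

variable {K M : Type*} [Field K] [AddCommGroup M] [Module K M] {U : Submodule K M}
  {θ : ExteriorAlgebra K M} {k : ℕ}

theorem pow_succ_inf_ker_mulLeft {v : M} (hv : v ∈ U) (hv0 : v ≠ 0) (k : ℕ) :
    U.map (ι K) ^ (k + 1) ⊓ LinearMap.ker (LinearMap.mulLeft K (ι K v)) = wedgePow v U k := by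
  apply le_antisymm
  · rintro θ ⟨hθ, hvθ⟩
    obtain ⟨d, hd⟩ := Projective.exists_dual_eq_one K hv0
    exact ⟨interiorProduct d θ, interiorProduct_mem_pow d hθ,
      ι_mul_interiorProduct_of_ι_mul_eq_zero hd hvθ⟩
  · rintro _ ⟨σ, hσ, rfl⟩
    exact ⟨ι_mul_mem_pow_succ hv hσ, ι_mul_ι_mul_self v σ⟩

instance finiteDimensional_map_ι_pow (U : Submodule K M) [FiniteDimensional K U] (k : ℕ) :
    FiniteDimensional K ↥(U.map (ι K) ^ k) :=
  Module.Finite.iff_fg.2 ((Module.Finite.iff_fg.1 inferInstance).pow k)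

theorem finrank_map_ι_pow (U : Submodule K M) [FiniteDimensional K U] (k : ℕ) :
    finrank K ↥(U.map (ι K) ^ k) = (finrank K U).choose k := by
  have map_exteriorPower :
      (⋀[K]^k U).map (ExteriorAlgebra.map U.subtype).toLinearMap = U.map (ι K) ^ k := by
    rw [Submodule.map_pow]
    congr 1
    ext z
    simp
  have hinj : Function.Injective (ExteriorAlgebra.map U.subtype) :=
    map_injective_field U.ker_subtype
  rw [← map_exteriorPower, ← exteriorPower.finrank_eq (R := K) (M := U) (n := k)]
  exact (Submodule.equivMapOfInjective _ hinj _).finrank_eq.symm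

theorem finrank_wedgePow {n : ℕ} (hU : finrank K U = n + 1) {v : M} (hv : v ∈ U) (hv0 : v ≠ 0)
    (k : ℕ) : finrank K (wedgePow v U k) = n.choose k := by
  have : FiniteDimensional K U := FiniteDimensional.of_finrank_eq_succ hU
  induction k with
  | zero =>
    have hι : ι K v ≠ 0 := fun h => hv0 ((ι_eq_zero_iff v).1 h)
    rw [wedgePow, pow_zero, Submodule.one_eq_span, Submodule.map_span, Set.image_singleton,
      LinearMap.mulLeft_apply, mul_one, finrank_span_singleton hι, Nat.choose_zero_right]
  | succ k ih =>
    have h := finrank_map_add_finrank_inf_ker (LinearMap.mulLeft K (ι K v)) (U.map (ι K) ^ (k + 1))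
    rw [pow_succ_inf_ker_mulLeft hv hv0, ih, finrank_map_ι_pow, hU, Nat.choose_succ_succ] at h
    exact Nat.add_right_cancel (h.trans (add_comm _ _))

theorem eq_zero_of_add_ι_mul_eq_zero {x : M} (hx : x ∉ U) {a b : ExteriorAlgebra K M} {j k : ℕ}
    (ha : a ∈ U.map (ι K) ^ j) (hb : b ∈ U.map (ι K) ^ k) (h : a + ι K x * b = 0) :
    a = 0 ∧ b = 0 := by
  obtain ⟨d, hdU, hdx⟩ := exists_dual_eq_zero_eq_one hx
  have hb0 : b = 0 := by
    have := congrArg (interiorProduct d) h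
    rwa [map_add, interiorProduct_ι_mul, interiorProduct_eq_zero_of_mem_pow hdU ha,
      interiorProduct_eq_zero_of_mem_pow hdU hb, hdx, one_smul, mul_zero, sub_zero, zero_add,
      map_zero] at this
  rw [hb0, mul_zero, add_zero] at h
  exact ⟨h, hb0⟩

theorem eq_zero_of_forall_ι_mul_eq_zero [FiniteDimensional K U] (hk : k < finrank K U)
    (hθ : θ ∈ ⋀[K]^k M) (h : ∀ u ∈ U, ι K u * θ = 0) : θ = 0 := by
  obtain ⟨u, hu, hu0⟩ := U.exists_mem_ne_zero_of_ne_bot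
    (Submodule.one_le_finrank_iff.1 (Nat.one_le_of_lt hk))
  induction k generalizing U θ u with
  | zero =>
    rw [exteriorPower, pow_zero, Submodule.mem_one] at hθ
    obtain ⟨r, rfl⟩ := hθ
    have hr : ι K (r • u) = 0 := by
      rw [map_smul, Algebra.smul_def, Algebra.commutes, h u hu]
    rw [ι_eq_zero_iff, smul_eq_zero_iff_left hu0] at hr
    rw [hr, map_zero]
  | succ k ih =>
    obtain ⟨d, hd⟩ := Projective.exists_dual_eq_one K hu0
    have ker_dim : k < finrank K (U ⊓ LinearMap.ker d : Submodule K M) := by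
      have hdim := finrank_map_add_finrank_inf_ker d U
      have hrank : finrank K (U.map d) ≤ 1 := (Submodule.finrank_le _).trans_eq (finrank_self K)
      omega
    have interiorProduct_mem : interiorProduct d θ ∈ ⋀[K]^k M := by
      rw [← map_ι_top_pow] at hθ ⊢
      exact interiorProduct_mem_pow d hθ
    have ker_mul : ∀ w ∈ U ⊓ LinearMap.ker d, ι K w * interiorProduct d θ = 0 := by
      rintro w ⟨hw, hdw⟩
      have := interiorProduct_ι_mul d w θ
      rw [h w hw, map_zero, LinearMap.mem_ker.1 hdw, zero_smul, zero_sub] at this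
      exact neg_eq_zero.1 this.symm
    have interiorProduct_eq_zero : interiorProduct d θ = 0 := by
      obtain ⟨w, hw, hw0⟩ := Submodule.exists_mem_ne_zero_of_ne_bot
        (Submodule.one_le_finrank_iff.1 (Nat.one_le_of_lt ker_dim))
      exact ih ker_dim interiorProduct_mem ker_mul w hw hw0
    rw [← ι_mul_interiorProduct_of_ι_mul_eq_zero hd (h u hu), interiorProduct_eq_zero, mul_zero]

theorem eq_zero_of_forall_pow_mul_eq_zero [FiniteDimensional K U] {j : ℕ}
    (hjk : j + k ≤ finrank K U) (hθ : θ ∈ ⋀[K]^k M)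
    (h : ∀ σ ∈ U.map (ι K) ^ j, σ * θ = 0) : θ = 0 := by
  induction j generalizing k θ with
  | zero =>
    have h1 := h 1 (by rw [pow_zero]; exact Submodule.one_le.1 le_rfl)
    rwa [one_mul] at h1
  | succ j ih =>
    refine eq_zero_of_forall_ι_mul_eq_zero (U := U) (by omega) hθ fun u hu => ?_
    refine ih (by omega) (ι_mul_mem_exteriorPower_succ u hθ) fun σ hσ => ?_
    rw [← mul_assoc]
    refine h _ ?_
    rw [pow_succ]
    exact Submodule.mul_mem_mul hσ (Submodule.mem_map_of_mem hu)

theorem ι_mul_ι_mem_span_of_ι_mul_eq_zero {u v v' : M} (hv' : v' ∉ K ∙ v)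
    (h : ι K v' * (ι K v * ι K u) = 0) : ι K v * ι K u ∈ K ∙ (ι K v * ι K v') := by
  obtain ⟨d, hd, hdv'⟩ := exists_dual_eq_zero_eq_one hv'
  have hdv : d v = 0 := hd v (Submodule.mem_span_singleton_self v)
  refine Submodule.mem_span_singleton.2 ⟨d u, ?_⟩
  rw [← ι_mul_interiorProduct_of_ι_mul_eq_zero hdv' h, interiorProduct_ι_mul, interiorProduct_ι,
    hdv, zero_smul, zero_sub, ← Algebra.commutes, ← Algebra.smul_def, mul_neg, mul_smul_comm,
    ι_mul_ι_eq_neg v' v, smul_neg, neg_neg]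

end Field

section Lagrangian

variable {V : Type} [AddCommGroup V] [Module ℂ V] {U : Submodule ℂ V} {v x : V} {k : ℕ}

theorem volC_apply_of_mem (vol : ⋀[ℂ]^k V →ₗ[ℂ] ℂ) {z : ExteriorAlgebra ℂ V}
    (hz : z ∈ ⋀[ℂ]^k V) : volC V k vol z = vol ⟨z, hz⟩ := by
  simp only [volC, LinearMap.comp_apply, LinearEquiv.coe_coe,
    DirectSum.decomposeLinearEquiv_apply]
  rw [DirectSum.decompose_of_mem (fun i : ℕ => ⋀[ℂ]^i V) hz]
  exact congrArg vol (DirectSum.component.lof_self ℂ _ _)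

theorem eq_zero_of_volC_ι_mul_eq_zero {vol : ⋀[ℂ]^(k + 1) V →ₗ[ℂ] ℂ}
    (hvol : Function.Injective vol) (hx : x ∉ U) {θ : ExteriorAlgebra ℂ V}
    (hθ : θ ∈ extPow V U k) (h : volC V (k + 1) vol (ι ℂ x * θ) = 0) : θ = 0 := by
  have hxθ : ι ℂ x * θ ∈ ⋀[ℂ]^(k + 1) V :=
    ι_mul_mem_exteriorPower_succ x (map_ι_pow_le_exteriorPower hθ)
  rw [volC_apply_of_mem vol hxθ, map_eq_zero_iff vol hvol] at h
  have h0 : (0 : ExteriorAlgebra ℂ V) + ι ℂ x * θ = 0 :=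
    (zero_add _).trans (congrArg Subtype.val h)
  exact (eq_zero_of_add_ι_mul_eq_zero hx (zero_mem (U.map (ι ℂ) ^ k)) hθ h0).2

theorem Fv_eq_inf_ker (hv0 : v ≠ 0) :
    Fv V v = ⋀[ℂ]^3 V ⊓ LinearMap.ker (LinearMap.mulLeft ℂ (ι ℂ v)) := by
  rw [← map_ι_top_pow, pow_succ_inf_ker_mulLeft Submodule.mem_top hv0, wedgePow, map_ι_top_pow, Fv]

theorem vWedge_eq_inf_ker (hv : v ∈ U) (hv0 : v ≠ 0) :
    vWedge V v U = extPow V U 2 ⊓ LinearMap.ker (LinearMap.mulLeft ℂ (ι ℂ v)) := by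
  rw [extPow, pow_succ_inf_ker_mulLeft hv hv0, wedgePow, pow_one, vWedge]

variable {W : Submodule ℂ (ExteriorAlgebra ℂ V)}

/-- The pairing `(p, w) ↦ vol(x ∧ p ∧ w)` between `v ∧ ⋀²U` and `W ⊆ ⋀²U`. -/
def volPairing (vol : ⋀[ℂ]^6 V →ₗ[ℂ] ℂ) (x v : V) (U : Submodule ℂ V)
    (W : Submodule ℂ (ExteriorAlgebra ℂ V)) : wedgePow v U 2 →ₗ[ℂ] W →ₗ[ℂ] ℂ :=
  (((LinearMap.mul ℂ _).comp (LinearMap.mulLeft ℂ (ι ℂ x))).compr₂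
    (volC V 6 vol)).domRestrict₁₂ (wedgePow v U 2) W

theorem volPairing_apply (vol : ⋀[ℂ]^6 V →ₗ[ℂ] ℂ) (p : wedgePow v U 2) (w : W) :
    volPairing vol x v U W p w = volC V 6 vol (ι ℂ x * p * w) :=
  rfl

theorem ker_volPairing_flip {vol : ⋀[ℂ]^6 V →ₗ[ℂ] ℂ} (hvol : Function.Injective vol)
    (hU : finrank ℂ U = 5) (hx : x ∉ U) (hv : v ∈ U) (hv0 : v ≠ 0) (hW : W ≤ extPow V U 2) :
    LinearMap.ker (volPairing vol x v U W).flip = (vWedge V v U).comap W.subtype := by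
  have : FiniteDimensional ℂ U := FiniteDimensional.of_finrank_eq_succ hU
  have swap : ∀ σ ∈ extPow V U 2, ∀ w : W, ι ℂ v * σ * (w : ExteriorAlgebra ℂ V) =
      σ * (ι ℂ v * w) := by
    intro σ hσ w
    rw [← mul_assoc, mul_ι_of_mem_pow v hσ, neg_one_sq, one_smul]
  ext w
  rw [Submodule.mem_comap, Submodule.subtype_apply, vWedge_eq_inf_ker hv hv0]
  constructor
  · intro hw
    refine ⟨hW w.2, ?_⟩
    have hvw : ι ℂ v * (w : ExteriorAlgebra ℂ V) ∈ U.map (ι ℂ) ^ 3 :=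
      ι_mul_mem_pow_succ hv (hW w.2)
    have hle : 2 + 3 ≤ finrank ℂ U := hU.ge
    refine eq_zero_of_forall_pow_mul_eq_zero hle (map_ι_pow_le_exteriorPower hvw) fun σ hσ => ?_
    refine eq_zero_of_volC_ι_mul_eq_zero hvol hx (k := 5) ?_ ?_
    · rw [extPow, pow_add _ 2 3]
      exact Submodule.mul_mem_mul hσ hvw
    · have := LinearMap.congr_fun hw ⟨ι ℂ v * σ, σ, hσ, rfl⟩
      rw [LinearMap.flip_apply, volPairing_apply, mul_assoc, swap σ hσ] at this
      exact this
  · rintro ⟨-, hvw⟩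
    have hvw : ι ℂ v * (w : ExteriorAlgebra ℂ V) = 0 := hvw
    ext ⟨_, σ, hσ, rfl⟩
    change volC V 6 vol (ι ℂ x * (ι ℂ v * σ) * w) = 0
    rw [mul_assoc, swap σ hσ, hvw, mul_zero, mul_zero, map_zero]

theorem mem_AWq_inf_Fv_iff {vol : ⋀[ℂ]^6 V →ₗ[ℂ] ℂ} {q : W →ₗ[ℂ] W →ₗ[ℂ] ℂ} (hx : x ∉ U)
    (hv : v ∈ U) (hv0 : v ≠ 0) (hW : W ≤ extPow V U 2) {z : ExteriorAlgebra ℂ V} :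
    z ∈ AWq V vol x U W q ⊓ Fv V v ↔
      ∃ w : W, (w : ExteriorAlgebra ℂ V) ∈ vWedge V v U ∧ ∃ p : wedgePow v U 2,
        q w + volPairing vol x v U W p = 0 ∧ (p : ExteriorAlgebra ℂ V) + ι ℂ x * w = z := by
  rw [Fv_eq_inf_ker hv0, vWedge_eq_inf_ker hv hv0]
  constructor
  · rintro ⟨⟨w, η, hη, rfl, hq⟩, -, hvz⟩
    have split : ι ℂ v * η + ι ℂ x * -(ι ℂ v * (w : ExteriorAlgebra ℂ V)) = 0 := by
      rw [← LinearMap.mem_ker.1 hvz, LinearMap.mulLeft_apply, mul_add, ι_mul_ι_mul_eq_neg v x,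
        mul_neg]
    obtain ⟨hvη, hvw⟩ := eq_zero_of_add_ι_mul_eq_zero hx (ι_mul_mem_pow_succ hv hη)
      (neg_mem (ι_mul_mem_pow_succ hv (hW w.2))) split
    have hηp : η ∈ wedgePow v U 2 := by
      rw [← pow_succ_inf_ker_mulLeft hv hv0]
      exact ⟨hη, hvη⟩
    refine ⟨w, ⟨hW w.2, neg_eq_zero.1 hvw⟩, ⟨η, hηp⟩, ?_, rfl⟩
    ext w'
    rw [LinearMap.add_apply, volPairing_apply, hq, add_neg_cancel, LinearMap.zero_apply]
  · rintro ⟨w, ⟨-, hvw⟩, ⟨p, hp⟩, hq, rfl⟩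
    rw [← pow_succ_inf_ker_mulLeft hv hv0] at hp
    refine ⟨⟨w, p, hp.1, rfl, fun w' => ?_⟩, ?_, ?_⟩
    · exact eq_neg_of_add_eq_zero_right (LinearMap.congr_fun hq w')
    · exact add_mem (map_ι_pow_le_exteriorPower hp.1)
        (ι_mul_mem_exteriorPower_succ x (map_ι_pow_le_exteriorPower (hW w.2)))
    · have hvw : ι ℂ v * (w : ExteriorAlgebra ℂ V) = 0 := hvw
      have hvp : ι ℂ v * p = 0 := hp.2
      change ι ℂ v * (p + ι ℂ x * w) = 0
      rw [mul_add, ι_mul_ι_mul_eq_neg v x, hvw, hvp, mul_zero, neg_zero, add_zero]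

theorem finrank_AWq_inf_Fv_add_finrank {vol : ⋀[ℂ]^6 V →ₗ[ℂ] ℂ} (hvol : Function.Injective vol)
    (hU : finrank ℂ U = 5) (hx : x ∉ U) (hW : W ≤ extPow V U 2) (q : W →ₗ[ℂ] W →ₗ[ℂ] ℂ)
    (hv : v ∈ U) (hv0 : v ≠ 0) {S : Submodule ℂ W} (hS : (vWedge V v U).comap W.subtype = S) :
    finrank ℂ (AWq V vol x U W q ⊓ Fv V v : Submodule ℂ (ExteriorAlgebra ℂ V)) + finrank ℂ W =
      6 + finrank ℂ S + finrank ℂ (LinearMap.ker (q.domRestrict₁₂ S S)) := by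
  have : FiniteDimensional ℂ U := FiniteDimensional.of_finrank_eq_succ hU
  have : FiniteDimensional ℂ W :=
    Submodule.finiteDimensional_of_le (S₂ := U.map (ι ℂ) ^ 2) hW
  have dim_P : finrank ℂ (wedgePow v U 2) = 6 := finrank_wedgePow hU hv hv0 2
  have : FiniteDimensional ℂ (wedgePow v U 2) := FiniteDimensional.of_finrank_eq_succ dim_P
  let e : S × wedgePow v U 2 →ₗ[ℂ] ExteriorAlgebra ℂ V :=
    (LinearMap.mulLeft ℂ (ι ℂ x) ∘ₗ W.subtype ∘ₗ S.subtype).coprod (wedgePow v U 2).subtype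
  have e_apply : ∀ y, e y = (y.2 : ExteriorAlgebra ℂ V) + ι ℂ x * y.1 := fun y => add_comm _ _
  have e_injective : Function.Injective e := by
    rintro ⟨w, p, hp⟩ ⟨w', p', hp'⟩ h
    have hpU : p - p' ∈ U.map (ι ℂ) ^ 3 :=
      ((pow_succ_inf_ker_mulLeft hv hv0 2).ge (sub_mem hp hp')).1
    have split := sub_eq_zero.2 h
    rw [e_apply, e_apply, add_sub_add_comm, ← mul_sub] at split
    obtain ⟨hp0, hw0⟩ :=
      eq_zero_of_add_ι_mul_eq_zero hx hpU (hW (sub_mem w.1.2 w'.1.2)) split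
    exact Prod.ext (Subtype.ext (Subtype.ext (sub_eq_zero.1 hw0)))
      (Subtype.ext (sub_eq_zero.1 hp0))
  have map_ker : (LinearMap.ker ((q.domRestrict S).coprod (volPairing vol x v U W))).map e =
      AWq V vol x U W q ⊓ Fv V v := by
    ext z
    rw [mem_AWq_inf_Fv_iff hx hv hv0 hW]
    constructor
    · rintro ⟨⟨⟨w, hw⟩, p⟩, hwp, rfl⟩
      exact ⟨w, hS.ge hw, p, hwp, (e_apply (⟨w, hw⟩, p)).symm⟩
    · rintro ⟨w, hw, p, hwp, rfl⟩
      exact ⟨⟨⟨w, hS.le hw⟩, p⟩, hwp, e_apply _⟩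
  rw [← map_ker, ← (Submodule.equivMapOfInjective e e_injective _).finrank_eq, ← dim_P]
  exact finrank_ker_coprod_add_finrank q _ ((ker_volPairing_flip hvol hU hx hv hv0 hW).trans hS)

theorem three_le_finrank_AWq_inf_Fv_iff {vol : ⋀[ℂ]^6 V →ₗ[ℂ] ℂ} (hvol : Function.Injective vol)
    (hU : finrank ℂ U = 5) (hx : x ∉ U) (hW : W ≤ extPow V U 2) (hW7 : finrank ℂ W = 7)
    (q : W →ₗ[ℂ] W →ₗ[ℂ] ℂ) (hv : v ∈ U) (hv0 : v ≠ 0)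
    (hWv : finrank ℂ (W ⊓ vWedge V v U : Submodule ℂ (ExteriorAlgebra ℂ V)) ≤ 2) :
    3 ≤ finrank ℂ (AWq V vol x U W q ⊓ Fv V v : Submodule ℂ (ExteriorAlgebra ℂ V)) ↔
      finrank ℂ (W ⊓ vWedge V v U : Submodule ℂ (ExteriorAlgebra ℂ V)) = 2 ∧
        ∀ a b : W, (a : ExteriorAlgebra ℂ V) ∈ W ⊓ vWedge V v U →
          (b : ExteriorAlgebra ℂ V) ∈ W ⊓ vWedge V v U → q a b = 0 := by
  have : FiniteDimensional ℂ W := FiniteDimensional.of_finrank_eq_succ hW7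
  let S : Submodule ℂ W := (vWedge V v U).comap W.subtype
  have dim_S : finrank ℂ S =
      finrank ℂ (W ⊓ vWedge V v U : Submodule ℂ (ExteriorAlgebra ℂ V)) := by
    rw [← Submodule.finrank_map_subtype_eq W S, Submodule.map_comap_subtype]
  have dim_A := finrank_AWq_inf_Fv_add_finrank hvol hU hx hW q hv hv0 (S := S) rfl
  have ker_le := Submodule.finrank_le (LinearMap.ker (q.domRestrict₁₂ S S))
  have isotropic_iff : finrank ℂ (LinearMap.ker (q.domRestrict₁₂ S S)) = finrank ℂ S ↔
      ∀ a b : W, (a : ExteriorAlgebra ℂ V) ∈ W ⊓ vWedge V v U →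
        (b : ExteriorAlgebra ℂ V) ∈ W ⊓ vWedge V v U → q a b = 0 :=
    (finrank_ker_domRestrict₁₂_eq_iff q S).trans
      ⟨fun h a b ha hb => h a ha.2 b hb.2, fun h a ha b hb => h a b ⟨a.2, ha⟩ ⟨b.2, hb⟩⟩
  rw [← isotropic_iff]
  omega

theorem span_singleton_eq_of_le_vWedge {v' : V} {L : Submodule ℂ (ExteriorAlgebra ℂ V)}
    (hL2 : 1 < finrank ℂ L) (hv'0 : v' ≠ 0) (hL : L ≤ vWedge V v U) (hL' : L ≤ vWedge V v' U) :
    (ℂ ∙ v) = ℂ ∙ v' := by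
  by_cases hv' : v' ∈ ℂ ∙ v
  · obtain ⟨c, rfl⟩ := Submodule.mem_span_singleton.1 hv'
    exact (Submodule.span_singleton_smul_eq (left_ne_zero_of_smul hv'0).isUnit v).symm
  · have hLspan : L ≤ ℂ ∙ (ι ℂ v * ι ℂ v') := by
      intro z hz
      obtain ⟨_, ⟨u, -, rfl⟩, rfl⟩ := hL hz
      obtain ⟨_, ⟨u', -, rfl⟩, hu'⟩ := hL' hz
      refine ι_mul_ι_mem_span_of_ι_mul_eq_zero hv' ?_
      exact (congrArg (ι ℂ v' * ·) hu').symm.trans (ι_mul_ι_mul_self v' _)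
    have hL1 := (Submodule.finrank_mono hLspan).trans (finrank_span_le_card _)
    rw [Set.toFinset_singleton, Finset.card_singleton] at hL1
    exact absurd hL1 hL2.not_ge

end Lagrangian

end EPW

theorem stmt10_general (V : Type) [AddCommGroup V] [Module ℂ V]
    (vol : ⋀[ℂ]^6 V →ₗ[ℂ] ℂ) (hvol : Function.Injective vol)
    (V₅ : Submodule ℂ V) (hV₅ : finrank ℂ V₅ = 5)
    (x : V) (hx : x ∉ V₅)
    (W : Submodule ℂ (ExteriorAlgebra ℂ V)) (hW : W ≤ EPW.extPow V V₅ 2)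
    (q : W →ₗ[ℂ] W →ₗ[ℂ] ℂ)
    (hW7 : finrank ℂ W = 7)
    (hWv : ∀ v ∈ V₅, v ≠ 0 →
      finrank ℂ (W ⊓ EPW.vWedge V v V₅ : Submodule ℂ (ExteriorAlgebra ℂ V)) ≤ 2) :
    (∀ v ∈ V₅, v ≠ 0 →
      3 ≤ finrank ℂ (EPW.AWq V vol x V₅ W q ⊓ EPW.Fv V v : Submodule ℂ (ExteriorAlgebra ℂ V)) →
      (W ⊓ EPW.vWedge V v V₅ ≤ W ∧
        finrank ℂ (W ⊓ EPW.vWedge V v V₅ : Submodule ℂ (ExteriorAlgebra ℂ V)) = 2 ∧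
        (∃ v' ∈ V₅, v' ≠ 0 ∧ W ⊓ EPW.vWedge V v V₅ ≤ EPW.vWedge V v' V₅) ∧
        (∀ a b : W, (a : ExteriorAlgebra ℂ V) ∈ W ⊓ EPW.vWedge V v V₅ →
          (b : ExteriorAlgebra ℂ V) ∈ W ⊓ EPW.vWedge V v V₅ → q a b = 0))) ∧
    (∀ v ∈ V₅, ∀ v'' ∈ V₅, v ≠ 0 → v'' ≠ 0 →
      3 ≤ finrank ℂ (EPW.AWq V vol x V₅ W q ⊓ EPW.Fv V v : Submodule ℂ (ExteriorAlgebra ℂ V)) →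
      3 ≤ finrank ℂ
        (EPW.AWq V vol x V₅ W q ⊓ EPW.Fv V v'' : Submodule ℂ (ExteriorAlgebra ℂ V)) →
      W ⊓ EPW.vWedge V v V₅ = W ⊓ EPW.vWedge V v'' V₅ →
      (ℂ ∙ v) = (ℂ ∙ v'')) ∧
    (∀ L : Submodule ℂ (ExteriorAlgebra ℂ V),
      L ≤ W → finrank ℂ L = 2 →
      (∃ v' ∈ V₅, v' ≠ 0 ∧ L ≤ EPW.vWedge V v' V₅) →
      (∀ a b : W, (a : ExteriorAlgebra ℂ V) ∈ L → (b : ExteriorAlgebra ℂ V) ∈ L → q a b = 0) →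
      ∃ v ∈ V₅, v ≠ 0 ∧
        3 ≤ finrank ℂ
          (EPW.AWq V vol x V₅ W q ⊓ EPW.Fv V v : Submodule ℂ (ExteriorAlgebra ℂ V)) ∧
        W ⊓ EPW.vWedge V v V₅ = L) := by
  have key := fun v hv hv0 =>
    EPW.three_le_finrank_AWq_inf_Fv_iff hvol hV₅ hx hW hW7 q hv hv0 (hWv v hv hv0)
  refine ⟨fun v hv hv0 h => ?_, fun v hv v'' _ hv0 hv''0 h _ heq => ?_, ?_⟩
  · obtain ⟨dim_inf, isotropic⟩ := (key v hv hv0).1 h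
    exact ⟨inf_le_left, dim_inf, ⟨v, hv, hv0, inf_le_right⟩, isotropic⟩
  · obtain ⟨dim_inf, -⟩ := (key v hv hv0).1 h
    exact EPW.span_singleton_eq_of_le_vWedge (one_lt_two.trans_eq dim_inf.symm) hv''0 inf_le_right
      (heq.le.trans inf_le_right)
  · rintro L hLW hL2 ⟨v, hv, hv0, hLv⟩ isotropic
    have hL : W ⊓ EPW.vWedge V v V₅ = L := by
      have : FiniteDimensional ℂ W := FiniteDimensional.of_finrank_eq_succ hW7
      exact (Submodule.eq_of_le_of_finrank_le (le_inf hLW hLv)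
        ((hWv v hv hv0).trans_eq hL2.symm)).symm
    refine ⟨v, hv, hv0, (key v hv hv0).2 ?_, hL⟩
    rw [hL]
    exact ⟨hL2, isotropic⟩

theorem stmt10 (V : Type) [AddCommGroup V] [Module ℂ V]
    (hdim : finrank ℂ V = 6)
    (vol : ⋀[ℂ]^6 V →ₗ[ℂ] ℂ) (hvol : Function.Bijective vol)
    (V₅ : Submodule ℂ V) (hV₅ : finrank ℂ V₅ = 5)
    (x : V) (hx : x ∉ V₅)
    (W : Submodule ℂ (ExteriorAlgebra ℂ V)) (hW : W ≤ EPW.extPow V V₅ 2)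
    (q : W →ₗ[ℂ] W →ₗ[ℂ] ℂ) (hq : ∀ a b : W, q a b = q b a)
    (hW7 : finrank ℂ W = 7)
    (hWv : ∀ v ∈ V₅, v ≠ 0 →
      finrank ℂ (W ⊓ EPW.vWedge V v V₅ : Submodule ℂ (ExteriorAlgebra ℂ V)) ≤ 2) :
    (∀ v ∈ V₅, v ≠ 0 →
      3 ≤ finrank ℂ (EPW.AWq V vol x V₅ W q ⊓ EPW.Fv V v : Submodule ℂ (ExteriorAlgebra ℂ V)) →
      (W ⊓ EPW.vWedge V v V₅ ≤ W ∧
        finrank ℂ (W ⊓ EPW.vWedge V v V₅ : Submodule ℂ (ExteriorAlgebra ℂ V)) = 2 ∧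
        (∃ v' ∈ V₅, v' ≠ 0 ∧ W ⊓ EPW.vWedge V v V₅ ≤ EPW.vWedge V v' V₅) ∧
        (∀ a b : W, (a : ExteriorAlgebra ℂ V) ∈ W ⊓ EPW.vWedge V v V₅ →
          (b : ExteriorAlgebra ℂ V) ∈ W ⊓ EPW.vWedge V v V₅ → q a b = 0))) ∧
    (∀ v ∈ V₅, ∀ v'' ∈ V₅, v ≠ 0 → v'' ≠ 0 →
      3 ≤ finrank ℂ (EPW.AWq V vol x V₅ W q ⊓ EPW.Fv V v : Submodule ℂ (ExteriorAlgebra ℂ V)) →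
      3 ≤ finrank ℂ
        (EPW.AWq V vol x V₅ W q ⊓ EPW.Fv V v'' : Submodule ℂ (ExteriorAlgebra ℂ V)) →
      W ⊓ EPW.vWedge V v V₅ = W ⊓ EPW.vWedge V v'' V₅ →
      (ℂ ∙ v) = (ℂ ∙ v'')) ∧
    (∀ L : Submodule ℂ (ExteriorAlgebra ℂ V),
      L ≤ W → finrank ℂ L = 2 →
      (∃ v' ∈ V₅, v' ≠ 0 ∧ L ≤ EPW.vWedge V v' V₅) →
      (∀ a b : W, (a : ExteriorAlgebra ℂ V) ∈ L → (b : ExteriorAlgebra ℂ V) ∈ L → q a b = 0) →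
      ∃ v ∈ V₅, v ≠ 0 ∧
        3 ≤ finrank ℂ
          (EPW.AWq V vol x V₅ W q ⊓ EPW.Fv V v : Submodule ℂ (ExteriorAlgebra ℂ V)) ∧
        W ⊓ EPW.vWedge V v V₅ = L) :=
  stmt10_general V vol hvol.injective V₅ hV₅ x hx W hW q hW7 hWv
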